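/- arXiv:2112.00843 — 9 statements merged into one kernel-verified Lean document; each statement's English description precedes it below -/
import Mathlib

section
/- Let p be an odd prime and let A be a finite-dimensional vector space over the field 𝔽_p = ZMod p of dimension r₁ ≥ 4. Then there exist an 𝔽_p-vector space B of dimension 2r₁ − 3 (e.g. B = Fin (2r₁ − 3) → 𝔽_p) and a surjective 𝔽_p-linear map β : ⋀²A → B such that for all a₁, a₂ ∈ A, if β(a₁ ∧ a₂) = 0 then a₁ ∧ a₂ = 0 (equivalently, a₁ and a₂ are linearly dependent). -/
/-!
Fix coordinates `c₀, …, c_{r-1}` on `A` and let the `k`-th coordinate of `β` be the sum of the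
Plücker coordinates `p_{ij} = cᵢ(x) cⱼ(y) - cⱼ(x) cᵢ(y)` over `i < j` with `i + j = k + 1`. The sums
`i + j` take exactly the `2r - 3` values `1, …, 2r - 3`, so `β` is surjective
(`pluckerSum_single`).

If `x, y` are independent, row reduction makes the leading index `a` of `x` strictly smaller than
the leading index `b` of `y`, without changing `x ∧ y` up to a sign. Every other nonzero Plücker
coordinate `p_{ij}` then has `i ≥ a` and `j ≥ b`, so `p_{ab} ≠ 0` is the only term of the sum with
`i + j = a + b`, and `β (x ∧ y) ≠ 0` (`pluckerSum_leading`). This works over any field.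
-/

section PluckerSum

variable {K : Type*} [Field K] {r : ℕ}

/-- The sum of the Plücker coordinates `p_{ij}` of `x ∧ y` over all `i < j` with `i + j = s`. -/
def pluckerSum (s : ℕ) (x y : Fin r → K) : K :=
  ∑ i : Fin r, ∑ j : Fin r,
    if i < j ∧ (i : ℕ) + j = s then x i * y j - x j * y i else 0

lemma pluckerSum_add_left (s : ℕ) (x x' y : Fin r → K) :
    pluckerSum s (x + x') y = pluckerSum s x y + pluckerSum s x' y := by
  simp only [pluckerSum, ← Finset.sum_add_distrib]
  refine Finset.sum_congr rfl fun i _ => Finset.sum_congr rfl fun j _ => ?_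
  split_ifs
  · simp only [Pi.add_apply]; ring
  · simp

lemma pluckerSum_smul_left (s : ℕ) (c : K) (x y : Fin r → K) :
    pluckerSum s (c • x) y = c * pluckerSum s x y := by
  simp only [pluckerSum, Finset.mul_sum]
  refine Finset.sum_congr rfl fun i _ => Finset.sum_congr rfl fun j _ => ?_
  split_ifs
  · simp only [Pi.smul_apply, smul_eq_mul]; ring
  · simp

lemma pluckerSum_swap (s : ℕ) (x y : Fin r → K) :
    pluckerSum s x y = - pluckerSum s y x := by
  simp only [pluckerSum, ← Finset.sum_neg_distrib]
  refine Finset.sum_congr rfl fun i _ => Finset.sum_congr rfl fun j _ => ?_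
  split_ifs
  · ring
  · simp

lemma pluckerSum_self (s : ℕ) (x : Fin r → K) : pluckerSum s x x = 0 := by
  refine Finset.sum_eq_zero fun i _ => Finset.sum_eq_zero fun j _ => ?_
  split_ifs
  · ring
  · rfl

lemma pluckerSum_add_right (s : ℕ) (x y y' : Fin r → K) :
    pluckerSum s x (y + y') = pluckerSum s x y + pluckerSum s x y' := by
  rw [pluckerSum_swap, pluckerSum_add_left, pluckerSum_swap s x y, pluckerSum_swap s x y']
  ring

lemma pluckerSum_smul_right (s : ℕ) (c : K) (x y : Fin r → K) :
    pluckerSum s x (c • y) = c * pluckerSum s x y := by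
  rw [pluckerSum_swap, pluckerSum_smul_left, pluckerSum_swap s x y]
  ring

/-- If `a < b`, `x` vanishes below `a` and `y` vanishes below `b`, then only `p_{ab}` contributes
to the sum of Plücker coordinates of weight `a + b`. -/
lemma pluckerSum_leading {x y : Fin r → K} {a b : Fin r} (hab : a < b)
    (hx : ∀ i < a, x i = 0) (hy : ∀ i < b, y i = 0) :
    pluckerSum (a + b) x y = x a * y b := by
  have hlt : ∀ i j : Fin r, i < j ∧ (i : ℕ) + j = a + b → (i, j) ≠ (a, b) →
      x i * y j - x j * y i = 0 := by
    rintro i j ⟨hij, hs⟩ hne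
    have hyi : y i = 0 := hy i (by simp only [Fin.lt_def] at *; omega)
    have hxy : x i = 0 ∨ y j = 0 := by
      rcases lt_trichotomy i a with h | h | h
      · exact Or.inl (hx i h)
      · exact absurd (by ext <;> simp <;> omega) hne
      · exact Or.inr (hy j (by simp only [Fin.lt_def] at *; omega))
    rcases hxy with h | h <;> simp [h, hyi]
  unfold pluckerSum
  rw [Finset.sum_eq_single a, Finset.sum_eq_single b]
  · simp [hab, hy a hab]
  · intro j _ hj
    split_ifs with h
    · exact hlt a j h (by simp [hj])
    · rfl
  · simp
  · intro i _ hi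
    refine Finset.sum_eq_zero fun j _ => ?_
    split_ifs with h
    · exact hlt i j h (by simp [hi])
    · rfl
  · simp

lemma pluckerSum_single (s : ℕ) {a b : Fin r} (hab : a < b) :
    pluckerSum s (Pi.single a (1 : K)) (Pi.single b 1) = if (a : ℕ) + b = s then 1 else 0 := by
  split_ifs with h
  · subst h
    rw [pluckerSum_leading hab (fun i hi => by simp [hi.ne]) (fun i hi => by simp [hi.ne])]
    simp
  · refine Finset.sum_eq_zero fun i _ => Finset.sum_eq_zero fun j _ => ?_
    split_ifs with h'
    · obtain ⟨hij, hs⟩ := h'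
      have h1 : ¬ (i = a ∧ j = b) := by rintro ⟨rfl, rfl⟩; exact h hs
      have h2 : ¬ (j = a ∧ i = b) := by rintro ⟨rfl, rfl⟩; exact absurd hij hab.not_gt
      simp only [Pi.single_apply]
      split_ifs <;> simp_all
    · rfl

/-- A nonzero vector has a leading index. -/
lemma exists_leading {x : Fin r → K} (hx : x ≠ 0) :
    ∃ a, x a ≠ 0 ∧ ∀ i < a, x i = 0 := by
  obtain ⟨i, hi⟩ := Function.ne_iff.mp hx
  obtain ⟨a, ha, hmin⟩ :=
    WellFounded.has_min (wellFounded_lt (α := Fin r)) {i | x i ≠ 0} ⟨i, hi⟩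
  exact ⟨a, ha, fun i hia => by_contra fun h => hmin i h hia⟩

/-- One elimination step: `a` is the leading index of `x`, and `y` starts no earlier. -/
lemma eq_smul_of_pluckerSum_eq_zero {x y : Fin r → K} {a : Fin r} (hxa : x a ≠ 0)
    (hx : ∀ i < a, x i = 0) (hy : ∀ i < a, y i = 0)
    (h : ∀ a b : Fin r, a < b → pluckerSum (a + b) x y = 0) : ∃ c : K, y = c • x := by
  refine ⟨y a / x a, ?_⟩
  by_contra hne
  set z : Fin r → K := y + (-(y a / x a)) • x with hz
  have hz0 : z ≠ 0 := fun h0 => hne (by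
    rw [hz, neg_smul, ← sub_eq_add_neg] at h0; exact sub_eq_zero.mp h0)
  obtain ⟨b, hzb, hb⟩ := exists_leading hz0
  have hab : a < b := by
    by_contra hba
    rcases (not_lt.mp hba).lt_or_eq with h' | h'
    · exact hzb (by simp [hz, hx b h', hy b h'])
    · subst h'
      exact hzb (by simp [hz, hxa])
  have key := pluckerSum_leading hab hx hb
  rw [hz, pluckerSum_add_right, pluckerSum_smul_right, pluckerSum_self, h a b hab] at key
  exact mul_ne_zero hxa hzb (by rw [hz, ← key]; simp)

lemma dependent_of_pluckerSum_eq_zero {x y : Fin r → K}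
    (h : ∀ a b : Fin r, a < b → pluckerSum (a + b) x y = 0) :
    (∃ c : K, y = c • x) ∨ ∃ c : K, x = c • y := by
  by_cases hx : x = 0
  · exact Or.inr ⟨0, by simp [hx]⟩
  by_cases hy : y = 0
  · exact Or.inl ⟨0, by simp [hy]⟩
  obtain ⟨a, hxa, ha⟩ := exists_leading hx
  obtain ⟨b, hyb, hb⟩ := exists_leading hy
  rcases le_total a b with hab | hab
  · exact Or.inl (eq_smul_of_pluckerSum_eq_zero hxa ha (fun i hi => hb i (hi.trans_le hab)) h)
  · refine Or.inr (eq_smul_of_pluckerSum_eq_zero hyb hb (fun i hi => ha i (hi.trans_le hab)) ?_)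
    intro a b hab
    rw [pluckerSum_swap, h a b hab, neg_zero]

/-- The alternating map on `A` whose coordinates are the sums of Plücker coordinates of weights
`1, …, 2r - 3`, with respect to the coordinate system `e`. -/
def pluckerAlternating {A : Type*} [AddCommGroup A] [Module K A] (e : A ≃ₗ[K] (Fin r → K)) :
    A [⋀^Fin 2]→ₗ[K] (Fin (2 * r - 3) → K) where
  toFun v k := pluckerSum (k + 1) (e (v 0)) (e (v 1))
  map_update_add' v i x y := by
    ext k
    fin_cases i <;> simp [pluckerSum_add_left, pluckerSum_add_right]
  map_update_smul' v i c x := by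
    ext k
    fin_cases i <;> simp [pluckerSum_smul_left, pluckerSum_smul_right]
  map_eq_zero_of_eq' v i j hv hij := by
    have h01 : v 0 = v 1 := by
      fin_cases i <;> fin_cases j <;> simp_all
    ext k
    simp [h01, pluckerSum_self]

end PluckerSum


/-- Let `p` be an odd prime and `A` a finite-dimensional `𝔽_p`-vector space of
dimension `r₁ ≥ 4`. Then there is a surjective linear map `β : ⋀²A → (Fin (2r₁ - 3) → 𝔽_p)`
such that `β (a₁ ∧ a₂) = 0` implies `a₁ ∧ a₂ = 0`. -/
theorem stmt0 (p : ℕ) (hp : p.Prime) (hp2 : p ≠ 2)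
    (A : Type) [AddCommGroup A] [Module (ZMod p) A] [Module.Finite (ZMod p) A]
    (r₁ : ℕ) (hr₁ : 4 ≤ r₁) (hdim : Module.finrank (ZMod p) A = r₁) :
    ∃ β : (⋀[ZMod p]^2 A) →ₗ[ZMod p] (Fin (2 * r₁ - 3) → ZMod p),
      Function.Surjective β ∧
      ∀ (a₁ a₂ : A)
        (h : ExteriorAlgebra.ι (ZMod p) a₁ * ExteriorAlgebra.ι (ZMod p) a₂ ∈ ⋀[ZMod p]^2 A),
        β ⟨ExteriorAlgebra.ι (ZMod p) a₁ * ExteriorAlgebra.ι (ZMod p) a₂, h⟩ = 0 →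
          ExteriorAlgebra.ι (ZMod p) a₁ * ExteriorAlgebra.ι (ZMod p) a₂ = 0 := by
  have : Fact p.Prime := ⟨hp⟩
  let e : A ≃ₗ[ZMod p] (Fin r₁ → ZMod p) := (Module.finBasisOfFinrankEq (ZMod p) A hdim).equivFun
  let β := exteriorPower.alternatingMapLinearEquiv (pluckerAlternating e)
  have hβ : ∀ v k, β (exteriorPower.ιMulti (ZMod p) 2 v) k =
      pluckerSum (k + 1) (e (v 0)) (e (v 1)) := fun v k => by
    simp only [β, exteriorPower.alternatingMapLinearEquiv_apply_ιMulti]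
    rfl
  refine ⟨β, ?_, ?_⟩
  · rw [← LinearMap.range_eq_top, eq_top_iff, ← (Pi.basisFun (ZMod p) (Fin (2 * r₁ - 3))).span_eq,
      Submodule.span_le]
    rintro _ ⟨k, rfl⟩
    -- Write the weight `k + 1` as `a + b` with `a < b < r₁`: take `a = 0` as long as `k + 1 < r₁`,
    -- and `b = r₁ - 1` afterwards.
    obtain ⟨a, b, hab, hk⟩ : ∃ a b : Fin r₁, a < b ∧ (a : ℕ) + b = k + 1 := by
      have := k.2
      by_cases hlt : (k : ℕ) + 1 < r₁
      · exact ⟨⟨0, by omega⟩, ⟨k + 1, hlt⟩, by simp [Fin.lt_def], by simp⟩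
      · exact ⟨⟨k + 2 - r₁, by omega⟩, ⟨r₁ - 1, by omega⟩, by simp only [Fin.lt_def]; omega,
          by simp only; omega⟩
    refine ⟨exteriorPower.ιMulti (ZMod p) 2 ![e.symm (Pi.single a 1), e.symm (Pi.single b 1)], ?_⟩
    ext l
    rw [hβ]
    simp [pluckerSum_single _ hab, hk, Pi.single_apply, Fin.ext_iff, eq_comm]
  · intro a₁ a₂ h h0
    have hw : (⟨_, h⟩ : ⋀[ZMod p]^2 A) = exteriorPower.ιMulti (ZMod p) 2 ![a₁, a₂] := by
      ext
      simp [exteriorPower.ιMulti_apply_coe, ExteriorAlgebra.ιMulti_apply]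
    rw [hw] at h0
    have hz : ∀ a b : Fin r₁, a < b → pluckerSum (a + b) (e a₁) (e a₂) = 0 := by
      intro a b hab
      have hb := b.2
      rw [Fin.lt_def] at hab
      have := congrFun h0 ⟨a + b - 1, by omega⟩
      rw [hβ] at this
      simpa [show (a : ℕ) + b - 1 + 1 = a + b by omega] using this
    rcases dependent_of_pluckerSum_eq_zero hz with ⟨c, hc⟩ | ⟨c, hc⟩
    · rw [← map_smul, e.injective.eq_iff] at hc
      simp [hc]
    · rw [← map_smul, e.injective.eq_iff] at hc
      simp [hc]
end

section
/- Let p be a prime, let N ≥ n ≥ 0 be integers, let V be an 𝔽_p-vector space of dimension N + 1, and let X be a finite set of points of the projectivization ℙ(V) of V whose cardinality satisfies card X < ∑_{i=0}^{n} p^i (the number of points of ℙⁿ(𝔽_p)). Then there exists a linear subspace W ⊆ V with dim W = N + 1 − n such that no point of X is represented by a nonzero vector of W. -/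
/-!
The subspace `W` is built up one dimension at a time, starting from `0`, always avoiding `X`.
If `W` avoids `X` and `dim W ≤ N - n`, then `V ⧸ W` has dimension at least `n + 1`, so `ℙ(V ⧸ W)`
has at least `∑_{i=0}^n p^i > card X` points. As `W` avoids `X`, each point of `X` has a
well-defined image in `ℙ(V ⧸ W)`, and by counting some point of `ℙ(V ⧸ W)` is not such an image.
The preimage in `V` of the corresponding line is the next subspace.
-/

open scoped LinearAlgebra.Projectivization

/-- The inductive step: if `ℙ(V ⧸ W)` has more points than `X`, then a subspace `W` avoiding `X`
can be enlarged by one dimension. -/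
lemma exists_finrank_succ_avoiding {K V : Type*} [Field K] [AddCommGroup V] [Module K V]
    [FiniteDimensional K V] (X : Finset (ℙ K V)) (W : Submodule K V)
    (hW : ∀ (v : V) (hv : v ≠ 0), v ∈ W → Projectivization.mk K v hv ∉ X)
    (hX : X.card < Nat.card (ℙ K (V ⧸ W))) :
    ∃ W' : Submodule K V, Module.finrank K W' = Module.finrank K W + 1 ∧
      ∀ (v : V) (hv : v ≠ 0), v ∈ W' → Projectivization.mk K v hv ∉ X := by
  have hrep : ∀ x : X, W.mkQ x.1.rep ≠ 0 := by
    intro x h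
    refine hW x.1.rep x.1.rep_nonzero ((Submodule.Quotient.mk_eq_zero W).1 h) ?_
    rw [Projectivization.mk_rep]
    exact x.2
  let f : X → ℙ K (V ⧸ W) := fun x => Projectivization.mk K (W.mkQ x.1.rep) (hrep x)
  have hf : ¬ Function.Surjective f := by
    intro h
    have := Nat.card_le_card_of_surjective f h
    rw [Nat.card_eq_fintype_card (α := X), Fintype.card_coe] at this
    omega
  obtain ⟨P, hP⟩ : ∃ P, ∀ x, f x ≠ P := by simpa [Function.Surjective] using hf
  obtain ⟨u, hu⟩ := W.mkQ_surjective P.rep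
  have huW : u ∉ W := fun h => P.rep_nonzero (by
    rw [← hu]
    exact (Submodule.Quotient.mk_eq_zero W).2 h)
  refine ⟨W ⊔ K ∙ u, Submodule.finrank_sup_span_singleton huW, fun v hv hvW hvX => ?_⟩
  obtain ⟨a, ha⟩ := Projectivization.exists_smul_eq_mk_rep K v hv
  have hr : (Projectivization.mk K v hv).rep ∈ W ⊔ K ∙ u := by
    rw [← ha]
    exact Submodule.smul_mem _ (a : K) hvW
  obtain ⟨w, hw, z, hz, hwz⟩ := Submodule.mem_sup.1 hr
  obtain ⟨b, rfl⟩ := Submodule.mem_span_singleton.1 hz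
  apply hP ⟨_, hvX⟩
  rw [← P.mk_rep]
  refine (Projectivization.mk_eq_mk_iff' K _ _ _ _).2 ⟨b, ?_⟩
  have hw0 : W.mkQ w = 0 := (Submodule.Quotient.mk_eq_zero W).2 hw
  rw [← hu, ← hwz, map_add, hw0, map_smul, zero_add]

/-- If `X` is a set of points of `ℙ(V)`, `dim V = N + 1`, with
`card X < #ℙⁿ(𝔽_p) = ∑_{i=0}^n p^i`, then there is a linear subspace `W ⊆ V` of dimension
`N + 1 - n` avoiding all the points of `X`. -/
theorem stmt1 (p : ℕ) [Fact p.Prime] (N n : ℕ) (hn : n ≤ N)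
    (V : Type) [AddCommGroup V] [Module (ZMod p) V] [FiniteDimensional (ZMod p) V]
    (hdim : Module.finrank (ZMod p) V = N + 1)
    (X : Finset (ℙ (ZMod p) V))
    (hX : X.card < ∑ i ∈ Finset.range (n + 1), p ^ i) :
    ∃ W : Submodule (ZMod p) V, Module.finrank (ZMod p) W = N + 1 - n ∧
      ∀ (v : V) (hv : v ≠ 0), v ∈ W → Projectivization.mk (ZMod p) v hv ∉ X := by
  have key : ∀ d : ℕ, d ≤ N + 1 - n → ∃ W : Submodule (ZMod p) V,
      Module.finrank (ZMod p) W = d ∧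
      ∀ (v : V) (hv : v ≠ 0), v ∈ W → Projectivization.mk (ZMod p) v hv ∉ X := by
    intro d
    induction d with
    | zero =>
      intro _
      exact ⟨⊥, finrank_bot _ _, fun v hv h => absurd ((Submodule.mem_bot _).1 h) hv⟩
    | succ d ih =>
      intro hd
      obtain ⟨W, rfl, hW⟩ := ih (by omega)
      refine exists_finrank_succ_avoiding X W hW (hX.trans_le ?_)
      have hq := W.finrank_quotient_add_finrank
      rw [Projectivization.card_of_finrank (ZMod p) (V ⧸ W) rfl, Nat.card_zmod]
      exact Finset.sum_le_sum_of_subset (Finset.range_mono (by omega))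
  exact key _ le_rfl
end

section
/- Let p be an odd prime and r an even positive integer. There exists a nonzero p-adic integer C ∈ ℤ_p such that: for every 𝔽_p-vector space V of dimension r equipped with a nondegenerate alternating bilinear form b, and for every finite-dimensional 𝔽_p-vector space A of dimension a, the number Ξ of 𝔽_p-linear maps ξ : A → V satisfying b(ξ x, ξ y) = 0 for all x, y ∈ A is congruent to C modulo p^a in ℤ_p. Consequently, setting k := v_p(C) (the p-adic valuation of C), for every such A with a > k the p-adic valuation of Ξ equals k. -/
/-!
Choosing a basis of `A` identifies isotropic maps `A → V` with `a`-tuples of pairwise orthogonal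
vectors of `V`. Write `f n a` for their number when `dim V = 2n` and `q = p`. If the first vector
is zero, the others form an arbitrary isotropic tuple; if it is some `v ≠ 0`, the others lie in
`v^⊥`, and since `v^⊥ / ⟨v⟩` is symplectic of dimension `2n - 2` there are `q^(a-1) f (n-1) (a-1)`
possibilities. Hence
  `f n a = f n (a-1) + (q^(2n) - 1) q^(a-1) f (n-1) (a-1)`, with `f n 0 = f 0 a = 1`.
The integers so defined are `isoCount`, and `card_isotropic_tuples` is the count.

The key point is a second recursion, in which only the rank changes modulo `q^a`
(`isoCount_rank_succ`):
  `f (n+1) a = -q^(2n+1) f n a + q^a f n a + q^(a+1) f n (a+1)`.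
It follows from the first one by a double induction. It gives
`f (n+1) a ≡ -q^(2n+1) f n a` modulo `q^a`, so `f n a ≡ (-1)^n q^(n^2)` modulo `q^a`. Thus the
constant is `C = (-1)^n p^(n^2)` for `r = 2n`, which is visibly nonzero, and the claim on valuations
follows from the congruence.
-/

/-! ### The numerical recursion -/

/-- The number of `a`-tuples of pairwise orthogonal vectors in a symplectic space of dimension
`2 * n` over a field with `q` elements, defined through the recursion on the first vector of the tuple. -/
def isoCount (q : ℤ) : ℕ → ℕ → ℤ
  | _, 0 => 1
  | 0, a + 1 => isoCount q 0 a
  | n + 1, a + 1 => isoCount q (n + 1) a + (q ^ (2 * (n + 1)) - 1) * q ^ a * isoCount q n a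

theorem isoCount_zero_left (q : ℤ) (a : ℕ) : isoCount q 0 a = 1 := by
  induction a with
  | zero => simp [isoCount]
  | succ a ih => simpa [isoCount] using ih

theorem isoCount_zero_right (q : ℤ) (n : ℕ) : isoCount q n 0 = 1 := by
  cases n <;> simp [isoCount]

theorem isoCount_succ_succ (q : ℤ) (n a : ℕ) : isoCount q (n + 1) (a + 1) =
    isoCount q (n + 1) a + (q ^ (2 * (n + 1)) - 1) * q ^ a * isoCount q n a := by
  simp [isoCount]

/-- The recursion in the rank. It determines `isoCount q n a` modulo `q ^ a`, because all terms
except the first one on the right are divisible by `q ^ a`. -/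
theorem isoCount_rank_succ (q : ℤ) (n a : ℕ) :
    isoCount q (n + 1) a =
      -q ^ (2 * n + 1) * isoCount q n a + q ^ a * isoCount q n a
        + q ^ (a + 1) * isoCount q n (a + 1) := by
  induction n generalizing a with
  | zero =>
    induction a with
    | zero => simp [isoCount]
    | succ a ih =>
      rw [isoCount_succ_succ, ih]
      simp only [isoCount_zero_left]
      ring
  | succ n ihn =>
    induction a with
    | zero =>
      simp only [isoCount_zero_right, isoCount_succ_succ]
      ring
    | succ a ih =>
      have h1 := isoCount_succ_succ q n a
      have h2 := isoCount_succ_succ q n (a + 1)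
      have h3 := isoCount_succ_succ q (n + 1) a
      have h4 := ihn a
      rw [h3, h2, h1]
      rw [h1] at ih
      -- After expanding in values at `a`, the only remaining value at `a + 1` is
      -- `isoCount q n (a + 1)`, which the identity for rank `n` eliminates.
      linear_combination ih + (q ^ (2 * (n + 1)) - 1) * q ^ (a + 2) * h4

theorem pow_dvd_isoCount_sub (q : ℤ) (n a : ℕ) :
    q ^ a ∣ isoCount q n a - (-1) ^ n * q ^ (n ^ 2) := by
  induction n with
  | zero => simp [isoCount_zero_left]
  | succ n ih =>
    obtain ⟨t, ht⟩ := ih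
    refine ⟨-q ^ (2 * n + 1) * t + isoCount q n a + q * isoCount q n (a + 1), ?_⟩
    rw [isoCount_rank_succ]
    linear_combination -q ^ (2 * n + 1) * ht

/-! ### Counting isotropic tuples and maps -/

section Counting

open Module

variable {p : ℕ} [Fact p.Prime] {V : Type} [AddCommGroup V] [Module (ZMod p) V]

theorem alternating_swap_eq_zero {b : V →ₗ[ZMod p] V →ₗ[ZMod p] ZMod p} (hb : ∀ x, b x x = 0)
    {x y : V} (h : b x y = 0) : b y x = 0 := by
  have h' := hb (x + y)
  simpa [hb, h] using h'

/-- For `v` outside the radical, the radical of `v^⊥ = ker (b v)` is `rad V ⊕ ⟨v⟩`. Together with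
`dim v^⊥ = dim V - 1` this says that passing to `v^⊥` lowers the rank of the form by `2`. -/
theorem finrank_radical_ker [Module.Finite (ZMod p) V]
    {b : V →ₗ[ZMod p] V →ₗ[ZMod p] ZMod p} (hb : ∀ x, b x x = 0) {v : V}
    (hv : v ∉ LinearMap.ker b) :
    finrank (ZMod p) (LinearMap.ker (b.domRestrict₁₂ (LinearMap.ker (b v)) (LinearMap.ker (b v))))
      = finrank (ZMod p) (LinearMap.ker b) + 1 := by
  rw [← Submodule.finrank_sup_span_singleton hv, (Submodule.equivSubtypeMap _ _).finrank_eq]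
  suffices h : (LinearMap.ker (b.domRestrict₁₂ (LinearMap.ker (b v)) (LinearMap.ker (b v)))).map
      (LinearMap.ker (b v)).subtype = LinearMap.ker b ⊔ Submodule.span (ZMod p) {v} by rw [h]
  ext x
  simp only [Submodule.mem_map, Submodule.mem_sup, Submodule.mem_span_singleton]
  constructor
  · rintro ⟨x, hx, rfl⟩
    have hle : LinearMap.ker (b v) ≤ LinearMap.ker (b x) := fun y hy =>
      LinearMap.congr_fun (LinearMap.mem_ker.1 hx) ⟨y, hy⟩
    -- A functional vanishing on the kernel of `b v` is a multiple of `b v`.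
    have hmem := mem_span_of_iInf_ker_le_ker (L := fun _ : Unit => b v) (K := b x)
      (by simpa using hle)
    rw [Set.range_const, Submodule.mem_span_singleton] at hmem
    obtain ⟨c, hc⟩ := hmem
    refine ⟨x - c • v, ?_, c • v, ⟨c, rfl⟩, by simp⟩
    simp [hc]
  · rintro ⟨y, hy, _, ⟨c, rfl⟩, rfl⟩
    rw [LinearMap.mem_ker] at hy
    have hvy : b v y = 0 := alternating_swap_eq_zero hb (by simp [hy])
    refine ⟨⟨y + c • v, by simp [hvy, hb]⟩, ?_, rfl⟩
    rw [LinearMap.mem_ker]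
    ext ⟨z, hz⟩
    rw [LinearMap.mem_ker] at hz
    change b (y + c • v) z = 0
    simp [hy, hz]

theorem card_isotropic_fiber_ker {b : V →ₗ[ZMod p] V →ₗ[ZMod p] ZMod p} (v : V) (a : ℕ) :
    Nat.card {w : Fin a → V // (∀ i, b v (w i) = 0) ∧ ∀ i j, b (w i) (w j) = 0} =
      Nat.card {w : Fin a → LinearMap.ker (b v) // ∀ i j,
        b.domRestrict₁₂ (LinearMap.ker (b v)) (LinearMap.ker (b v)) (w i) (w j) = 0} :=
  Nat.card_congr
    { toFun := fun w => ⟨fun i => ⟨w.1 i, w.2.1 i⟩, fun i j => w.2.2 i j⟩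
      invFun := fun w => ⟨fun i => w.1 i, fun i => (w.1 i).2, fun i j => w.2 i j⟩
      left_inv := fun _ => rfl
      right_inv := fun _ => rfl }

/-- An isotropic `(a + 1)`-tuple is a vector `v` followed by an isotropic `a`-tuple in `v^⊥`. -/
def isotropicConsEquiv {b : V →ₗ[ZMod p] V →ₗ[ZMod p] ZMod p} (hb : ∀ x, b x x = 0) (a : ℕ) :
    {w : Fin (a + 1) → V // ∀ i j, b (w i) (w j) = 0} ≃
      Σ v : V, {w : Fin a → V // (∀ i, b v (w i) = 0) ∧ ∀ i j, b (w i) (w j) = 0} where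
  toFun w := ⟨w.1 0, fun i => w.1 i.succ, fun i => w.2 0 i.succ, fun i j => w.2 i.succ j.succ⟩
  invFun s := ⟨Fin.cons s.1 s.2.1, fun i j => by
    induction i using Fin.cases with
    | zero =>
      induction j using Fin.cases with
      | zero => simp [hb]
      | succ j => simpa using s.2.2.1 j
    | succ i =>
      induction j using Fin.cases with
      | zero => simpa using alternating_swap_eq_zero hb (s.2.2.1 i)
      | succ j => simpa using s.2.2.2 i j⟩
  left_inv w := Subtype.ext (Fin.cons_self_tail w.1)
  right_inv _ := rfl

/-- Count of pairwise orthogonal `a`-tuples for a form of rank `2 * n` whose radical has dimension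
`s`. Degenerate forms are allowed so that the induction on `a` can pass from `V` to the subspace
`v^⊥` rather than to the quotient `v^⊥ / ⟨v⟩`: of the `p ^ (2 * n + s)` choices of the first
vector `v`, the `p ^ s` radical ones leave all of `V` for the others, and the remaining ones leave
a space with parameters `(n - 1, s + 1)`. -/
theorem card_isotropic_tuples (a : ℕ) (V : Type) [AddCommGroup V] [Module (ZMod p) V]
    [Module.Finite (ZMod p) V] (b : V →ₗ[ZMod p] V →ₗ[ZMod p] ZMod p) (hb : ∀ x, b x x = 0)
    (n s : ℕ) (hs : finrank (ZMod p) (LinearMap.ker b) = s)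
    (hV : finrank (ZMod p) V = 2 * n + s) :
    (Nat.card {w : Fin a → V // ∀ i j, b (w i) (w j) = 0} : ℤ) =
      (p : ℤ) ^ (s * a) * isoCount p n a := by
  classical
  induction a generalizing V n s with
  | zero => simp [isoCount_zero_right]
  | succ a ih =>
    have : Finite V := Module.finite_of_finite (ZMod p)
    have : Fintype V := Fintype.ofFinite V
    have hcard (W : Type) [AddCommGroup W] [Module (ZMod p) W] [Fintype W] :
        Fintype.card W = p ^ finrank (ZMod p) W := by
      rw [Module.card_eq_pow_finrank (K := ZMod p), ZMod.card]
    rw [Nat.card_congr (isotropicConsEquiv hb a), Nat.card_sigma]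
    have hrad : ∀ v ∈ LinearMap.ker b,
        (Nat.card {w : Fin a → V // (∀ i, b v (w i) = 0) ∧ ∀ i j, b (w i) (w j) = 0} : ℤ) =
          (p : ℤ) ^ (s * a) * isoCount p n a := by
      intro v hv
      rw [← ih V b hb n s hs hV]
      rw [LinearMap.mem_ker] at hv
      simp [hv]
    cases n with
    | zero =>
      have htop : LinearMap.ker b = ⊤ := Submodule.eq_top_of_finrank_eq (by omega)
      push_cast
      rw [Finset.sum_congr rfl fun v _ => hrad v (htop ▸ Submodule.mem_top)]
      simp only [Finset.sum_const, Finset.card_univ, hcard V, hV, isoCount_zero_left]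
      simp
      ring
    | succ n =>
      have hnon : ∀ v ∉ LinearMap.ker b,
          (Nat.card {w : Fin a → V // (∀ i, b v (w i) = 0) ∧ ∀ i j, b (w i) (w j) = 0} : ℤ) =
            (p : ℤ) ^ ((s + 1) * a) * isoCount p n a := by
        intro v hv
        rw [card_isotropic_fiber_ker]
        refine ih _ (b.domRestrict₁₂ (LinearMap.ker (b v)) (LinearMap.ker (b v)))
          (fun x => hb x) n (s + 1) (by rw [finrank_radical_ker hb hv, hs]) ?_
        have := Module.Dual.finrank_ker_add_one_of_ne_zero (f := b v) hv
        omega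
      push_cast
      rw [← Finset.sum_filter_add_sum_filter_not Finset.univ (fun v => v ∈ LinearMap.ker b),
        Finset.sum_congr rfl fun v hv => hrad v (Finset.mem_filter.1 hv).2,
        Finset.sum_congr rfl fun v hv => hnon v (Finset.mem_filter.1 hv).2]
      have hR : (Finset.univ.filter (fun v => v ∈ LinearMap.ker b)).card = p ^ s := by
        rw [← Fintype.card_subtype, ← hs]
        exact hcard (LinearMap.ker b)
      have hN := Finset.card_filter_add_card_filter_not
        (s := (Finset.univ : Finset V)) (fun v => v ∈ LinearMap.ker b)
      rw [hR, Finset.card_univ, hcard V, hV] at hN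
      rw [Finset.sum_const, Finset.sum_const, hR, isoCount_succ_succ]
      zify at hN
      simp only [nsmul_eq_mul]
      push_cast
      linear_combination (p : ℤ) ^ ((s + 1) * a) * isoCount p n a * hN

theorem card_isotropic_maps [Module.Finite (ZMod p) V] {b : V →ₗ[ZMod p] V →ₗ[ZMod p] ZMod p}
    (hb : ∀ x, b x x = 0) (hnd : ∀ x, (∀ y, b x y = 0) → x = 0) {n : ℕ}
    (hV : finrank (ZMod p) V = 2 * n) (A : Type) [AddCommGroup A] [Module (ZMod p) A]
    [Module.Finite (ZMod p) A] :
    (Nat.card {ξ : A →ₗ[ZMod p] V // ∀ x y, b (ξ x) (ξ y) = 0} : ℤ) =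
      isoCount p n (finrank (ZMod p) A) := by
  have hker : LinearMap.ker b = ⊥ := by
    rw [LinearMap.ker_eq_bot']
    exact fun x hx => hnd x fun y => by simp [hx]
  have h := card_isotropic_tuples (finrank (ZMod p) A) V b hb n 0 (by rw [hker]; simp) (by simpa)
  rw [zero_mul, pow_zero, one_mul] at h
  rw [← h]
  let B := Module.finBasis (ZMod p) A
  refine congrArg _ (Nat.card_congr ((B.constr ℕ).symm.toEquiv.subtypeEquiv fun ξ => ?_))
  constructor
  · intro hξ i j
    exact hξ _ _
  · intro hξ x y
    have h0 : b.compl₁₂ ξ ξ = 0 := B.ext fun i => B.ext fun j => hξ i j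
    exact LinearMap.congr_fun₂ h0 x y

end Counting

theorem valuation_eq_of_pow_dvd_sub {p : ℕ} [Fact p.Prime] {x C : ℤ_[p]} {a : ℕ}
    (hC : C ≠ 0) (hdvd : (p : ℤ_[p]) ^ a ∣ x - C) (ha : C.valuation < a) :
    x.valuation = C.valuation := by
  have hdvd_iff (y : ℤ_[p]) (hy : y ≠ 0) (m : ℕ) : (p : ℤ_[p]) ^ m ∣ y ↔ m ≤ y.valuation := by
    rw [← PadicInt.mem_span_pow_iff_le_valuation y hy, Ideal.mem_span_singleton]
  have hx (m : ℕ) (hm : m ≤ a) : (p : ℤ_[p]) ^ m ∣ x ↔ m ≤ C.valuation := by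
    rw [← hdvd_iff C hC, dvd_iff_dvd_of_dvd_sub ((pow_dvd_pow _ hm).trans hdvd)]
  have hx0 : x ≠ 0 := by
    rintro rfl
    have := (hx a le_rfl).1 (dvd_zero _)
    omega
  refine le_antisymm ?_ ((hdvd_iff x hx0 _).1 ((hx _ ha.le).2 le_rfl))
  by_contra! hlt
  have := (hx (C.valuation + 1) ha).1 ((hdvd_iff x hx0 _).2 hlt)
  omega

/-- For an odd prime `p` and an even `r > 0`, there is a nonzero `C ∈ ℤ_p` such
that for every `r`-dimensional `𝔽_p`-space `V` with a nondegenerate alternating bilinear form `b`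
and every `a`-dimensional `𝔽_p`-space `A`, the number `Ξ` of linear maps `ξ : A → V` which are
totally isotropic (`b (ξ x) (ξ y) = 0` for all `x y`) is congruent to `C` mod `p^a`; and whenever
`a > v_p(C)`, the `p`-adic valuation of `Ξ` equals `v_p(C)`. -/
theorem stmt2 (p : ℕ) [Fact p.Prime] (hp2 : p ≠ 2) (r : ℕ) (hr : 0 < r) (hre : Even r) :
    ∃ C : ℤ_[p], C ≠ 0 ∧
      ∀ (V : Type) [AddCommGroup V] [Module (ZMod p) V],
        Module.finrank (ZMod p) V = r →
        ∀ b : V →ₗ[ZMod p] V →ₗ[ZMod p] ZMod p,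
          (∀ x, b x x = 0) →
          (∀ x, (∀ y, b x y = 0) → x = 0) →
          ∀ (A : Type) [AddCommGroup A] [Module (ZMod p) A] [Module.Finite (ZMod p) A] (a : ℕ),
            Module.finrank (ZMod p) A = a →
            (p : ℤ_[p]) ^ a ∣
              ((Nat.card {ξ : A →ₗ[ZMod p] V // ∀ x y, b (ξ x) (ξ y) = 0} : ℤ_[p]) - C) ∧
            (C.valuation < (a : ℤ) →
              ((Nat.card {ξ : A →ₗ[ZMod p] V // ∀ x y, b (ξ x) (ξ y) = 0} : ℤ_[p])).valuation =
                C.valuation) := by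
  obtain ⟨n, rfl⟩ := hre
  have hp0 : (p : ℤ_[p]) ≠ 0 := Nat.cast_ne_zero.2 (Fact.out : p.Prime).ne_zero
  have hC : (-1) ^ n * (p : ℤ_[p]) ^ (n ^ 2) ≠ 0 :=
    mul_ne_zero (pow_ne_zero _ (by simp)) (pow_ne_zero _ hp0)
  refine ⟨(-1) ^ n * (p : ℤ_[p]) ^ (n ^ 2), hC, ?_⟩
  intro V _ _ hV b hb hnd A _ _ _ a ha
  have : Module.Finite (ZMod p) V := Module.finite_of_finrank_pos (by omega)
  have hcount := card_isotropic_maps hb hnd (n := n) (by omega) A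
  rw [ha] at hcount
  have hdvd := map_dvd (Int.castRingHom ℤ_[p]) (pow_dvd_isoCount_sub p n a)
  rw [← hcount] at hdvd
  simp only [map_sub, map_mul, map_pow, map_neg, map_one, eq_intCast, Int.cast_natCast] at hdvd
  exact ⟨hdvd, fun hlt => valuation_eq_of_pow_dvd_sub hC hdvd (by exact_mod_cast hlt)⟩
end

section
/- Let p be an odd prime, let V be an 𝔽_p-vector space of finite even dimension r equipped with a nondegenerate alternating bilinear form b, and let 0 ≤ d ≤ r/2. Then the number M_d of d-dimensional subspaces W ⊆ V that are totally isotropic for b (i.e. b(x,y) = 0 for all x, y ∈ W) satisfies M_d · ∏_{i=0}^{d−1} (p^d − p^i) = ∏_{i=0}^{d−1} (p^{r−i} − p^i). -/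
/-!
The proof counts, in two ways, the *isotropic frames* of length `d`: linearly independent
families `s : Fin d → V` whose vectors are pairwise orthogonal for `b`.

Adding vectors one at a time, a frame `s` of length `k` with span `S` is extended by exactly the
vectors of `Sᗮ \ S`. Here `S ⊆ Sᗮ`, and `dim Sᗮ = r - k` because `b` is nondegenerate, so there are
`p ^ (r - k) - p ^ k` extensions (`card_extension`); hence the number of frames of length `d` is the
right-hand side (`card_isotropicFrame`). Grouping the frames by their span instead, each
`d`-dimensional totally isotropic subspace `W` contributes its `∏ (p ^ d - p ^ i)` ordered bases
(`isotropicFrameEquivSigma`), which gives the left-hand side.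
-/

/-- The linearly independent families of `k` vectors of `V` that are pairwise orthogonal for `b`. -/
abbrev IsotropicFrame {K V : Type*} [Field K] [AddCommGroup V] [Module K V]
    (b : LinearMap.BilinForm K V) (k : ℕ) : Type _ :=
  {s : Fin k → V // LinearIndependent K s ∧ ∀ i j, b (s i) (s j) = 0}

section

variable {K V : Type*} [Field K] [AddCommGroup V] [Module K V] {b : LinearMap.BilinForm K V}

lemma mem_orthogonal_span_range {ι : Type*} {s : ι → V} {x : V} :
    x ∈ b.orthogonal (Submodule.span K (Set.range s)) ↔ ∀ i, b (s i) x = 0 := by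
  rw [LinearMap.BilinForm.mem_orthogonal_iff]
  refine ⟨fun h i => h _ (Submodule.subset_span ⟨i, rfl⟩), fun h y hy => ?_⟩
  have hle : Submodule.span K (Set.range s) ≤ LinearMap.ker (b.flip x) := by
    rw [Submodule.span_le]
    rintro _ ⟨i, rfl⟩
    exact h i
  exact hle hy

lemma span_le_orthogonal_span {ι : Type*} {s : ι → V} (h : ∀ i j, b (s i) (s j) = 0) :
    Submodule.span K (Set.range s) ≤ b.orthogonal (Submodule.span K (Set.range s)) := by
  rw [Submodule.span_le]
  rintro _ ⟨j, rfl⟩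
  exact mem_orthogonal_span_range.2 fun i => h i j

/-- A frame of length `k + 1` is a frame of length `k`, its tail, together with a vector orthogonal
to the span of the tail but not in that span. -/
def isotropicFrameSuccEquiv (hb : b.IsAlt) (k : ℕ) :
    IsotropicFrame b (k + 1) ≃ Σ s : IsotropicFrame b k,
      {x : V // x ∈ b.orthogonal (Submodule.span K (Set.range s.1)) ∧
        x ∉ Submodule.span K (Set.range s.1)} where
  toFun s := ⟨⟨Fin.tail s.1, (linearIndependent_finSucc.1 s.2.1).1, fun i j => s.2.2 i.succ j.succ⟩,
    s.1 0, mem_orthogonal_span_range.2 fun i => s.2.2 i.succ 0,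
    (linearIndependent_finSucc.1 s.2.1).2⟩
  invFun t := ⟨Fin.cons t.2.1 t.1.1, linearIndependent_finCons.2 ⟨t.1.2.1, t.2.2.2⟩, by
    have h := mem_orthogonal_span_range.1 t.2.2.1
    simp only [Fin.forall_fin_succ, Fin.cons_zero, Fin.cons_succ]
    exact ⟨⟨hb _, fun i => hb.isRefl _ _ (h i)⟩, fun i => ⟨h i, t.1.2.2 i⟩⟩⟩
  left_inv s := Subtype.ext (Fin.cons_self_tail s.1)
  right_inv t := rfl

variable [Module.Finite K V]

/-- A frame of length `d` is a `d`-dimensional totally isotropic subspace, the span of the frame,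
together with an ordered basis of it. -/
noncomputable def isotropicFrameEquivSigma (b : LinearMap.BilinForm K V) (d : ℕ) :
    (Σ W : {W : Submodule K V // Module.finrank K W = d ∧ ∀ x ∈ W, ∀ y ∈ W, b x y = 0},
      {t : Fin d → W.1 // LinearIndependent K t}) ≃ IsotropicFrame b d :=
  Equiv.ofBijective
    (fun t => ⟨fun i => (t.2.1 i : V), t.2.2.map' t.1.1.subtype (Submodule.ker_subtype _),
      fun i j => t.1.2.2 _ (t.2.1 i).2 _ (t.2.1 j).2⟩) <| by
  constructor
  · -- The subspace is recovered from the frame as its span, by comparing dimensions.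
    have key : ∀ (W : Submodule K V), Module.finrank K W = d → ∀ t : Fin d → W,
        LinearIndependent K t → W = Submodule.span K (Set.range fun i => (t i : V)) := by
      intro W hW t ht
      refine (Submodule.eq_of_le_of_finrank_eq (Submodule.span_le.2 ?_) ?_).symm
      · rintro _ ⟨i, rfl⟩
        exact (t i).2
      · rw [hW]
        exact (finrank_span_eq_card (ht.map' W.subtype (Submodule.ker_subtype _))).trans
          (Fintype.card_fin d)
    rintro ⟨⟨W, hW⟩, t, ht⟩ ⟨⟨W', hW'⟩, t', ht'⟩ h
    have h1 : (fun i => (t i : V)) = fun i => (t' i : V) := congrArg Subtype.val h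
    obtain rfl : W = W' := by rw [key W hW.1 t ht, h1, ← key W' hW'.1 t' ht']
    obtain rfl : t = t' := funext fun i => Subtype.ext (congrFun h1 i)
    rfl
  · rintro ⟨s, hs, hi⟩
    refine ⟨⟨⟨Submodule.span K (Set.range s), ?_, fun x hx y hy => ?_⟩,
      fun i => ⟨s i, Submodule.subset_span ⟨i, rfl⟩⟩, ?_⟩, rfl⟩
    · rw [finrank_span_eq_card hs, Fintype.card_fin]
    · exact span_le_orthogonal_span hi hy x hx
    · exact LinearIndependent.of_comp (Submodule.subtype _) hs

variable [Fintype K]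

lemma card_extension (hnd : b.Nondegenerate) {k : ℕ} (s : IsotropicFrame b k) :
    Nat.card {x : V // x ∈ b.orthogonal (Submodule.span K (Set.range s.1)) ∧
        x ∉ Submodule.span K (Set.range s.1)} =
      Fintype.card K ^ (Module.finrank K V - k) - Fintype.card K ^ k := by
  have : Finite V := Module.finite_of_finite K
  have hS : Module.finrank K (Submodule.span K (Set.range s.1)) = k := by
    rw [finrank_span_eq_card s.2.1, Fintype.card_fin]
  have hle := span_le_orthogonal_span s.2.2
  have hO := LinearMap.BilinForm.finrank_orthogonal hnd (Submodule.span K (Set.range s.1))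
  rw [hS] at hO
  generalize Submodule.span K (Set.range s.1) = S at *
  change Nat.card ↥((b.orthogonal S : Set V) \ (S : Set V)) = _
  rw [Nat.card_coe_set_eq, Set.ncard_sdiff hle, ← Nat.card_coe_set_eq, ← Nat.card_coe_set_eq]
  simp only [SetLike.coe_sort_coe]
  rw [Module.natCard_eq_pow_finrank (K := K), Module.natCard_eq_pow_finrank (K := K) (V := S), hO,
    hS, Nat.card_eq_fintype_card]

/-- No bound on `k` is needed: `dim V` is even, and for `2 * k > dim V` there are no frames while
the factor with `2 * i = dim V` is zero. -/
lemma card_isotropicFrame (hb : b.IsAlt) (hnd : b.Nondegenerate) (k : ℕ) :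
    Nat.card (IsotropicFrame b k) =
      ∏ i ∈ Finset.range k,
        (Fintype.card K ^ (Module.finrank K V - i) - Fintype.card K ^ i) := by
  have : Finite V := Module.finite_of_finite K
  induction k with
  | zero =>
    have : Unique (IsotropicFrame b 0) :=
      { default := ⟨Fin.elim0, linearIndependent_empty_type, fun i => i.elim0⟩
        uniq := fun s => Subsingleton.elim _ _ }
    simp
  | succ k ih =>
    have : Fintype (IsotropicFrame b k) := Fintype.ofFinite _
    rw [Nat.card_congr (isotropicFrameSuccEquiv hb k), Nat.card_sigma,
      Finset.sum_congr rfl fun s _ => card_extension hnd s, Finset.sum_const, Finset.card_univ,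
      ← Nat.card_eq_fintype_card, ih, smul_eq_mul, Finset.prod_range_succ]

end

/-- Let `V` be an `𝔽_p`-vector space (`p` odd) of even dimension `r` with a
nondegenerate alternating bilinear form `b`, and let `d ≤ r / 2`. Then the number `M_d` of
`d`-dimensional totally isotropic subspaces satisfies
`M_d * ∏_{i=0}^{d-1} (p^d - p^i) = ∏_{i=0}^{d-1} (p^{r-i} - p^i)`. -/
theorem stmt4 (p : ℕ) [Fact p.Prime] (hp2 : p ≠ 2)
    (V : Type) [AddCommGroup V] [Module (ZMod p) V] [Module.Finite (ZMod p) V]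
    (r : ℕ) (hre : Even r) (hr : Module.finrank (ZMod p) V = r)
    (b : V →ₗ[ZMod p] V →ₗ[ZMod p] ZMod p)
    (halt : ∀ x, b x x = 0)
    (hnd : ∀ x, (∀ y, b x y = 0) → x = 0)
    (d : ℕ) (hd : d ≤ r / 2) :
    Nat.card {W : Submodule (ZMod p) V //
        Module.finrank (ZMod p) W = d ∧ ∀ x ∈ W, ∀ y ∈ W, b x y = 0} *
      ∏ i ∈ Finset.range d, (p ^ d - p ^ i) =
      ∏ i ∈ Finset.range d, (p ^ (r - i) - p ^ i) := by
  have hb : LinearMap.BilinForm.IsAlt b := halt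
  have hnd' : LinearMap.BilinForm.Nondegenerate b :=
    (LinearMap.IsRefl.nondegenerate_iff_separatingLeft hb.isRefl).2 hnd
  have : Finite V := Module.finite_of_finite (ZMod p)
  have : Fintype {W : Submodule (ZMod p) V //
      Module.finrank (ZMod p) W = d ∧ ∀ x ∈ W, ∀ y ∈ W, b x y = 0} := Fintype.ofFinite _
  have hframes := card_isotropicFrame hb hnd' d
  rw [← Nat.card_congr (isotropicFrameEquivSigma b d), Nat.card_sigma, hr, ZMod.card] at hframes
  rw [← hframes, Finset.sum_congr rfl fun W _ => card_linearIndependent W.2.1.ge,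
    Finset.sum_congr rfl fun W _ => by rw [W.2.1, ZMod.card, Fin.prod_univ_eq_prod_range fun i => p ^ d - p ^ i],
    Finset.sum_const, Finset.card_univ, smul_eq_mul, Nat.card_eq_fintype_card]
end

section
/- Let p be an odd prime, let V be an 𝔽_p-vector space of finite even dimension r with a nondegenerate alternating bilinear form b, and let A be an 𝔽_p-vector space of finite dimension a. Then the number of 𝔽_p-linear maps ξ : A → V with b(ξ x, ξ y) = 0 for all x, y ∈ A equals ∑_{d=0}^{min(a, r/2)} I_d · M_d, where I_d is the number of surjective 𝔽_p-linear maps from A onto 𝔽_p^d and M_d is the number of d-dimensional totally isotropic subspaces of V. -/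
/-!
A linear map `ξ : A → V` is a surjection onto its range followed by an inclusion, and `ξ` satisfies
`b (ξ x) (ξ y) = 0` exactly when its range is totally isotropic. Choosing one isomorphism
`𝔽_p^d ≃ W` for each `d`-dimensional subspace `W` turns this factorisation into a bijection between
such maps of rank `d` and pairs (surjection `A → 𝔽_p^d`, totally isotropic `W` of dimension `d`).
The rank is at most `dim A`, and at most `r / 2` by `two_mul_finrank_le_of_isotropic`, so
summing over `d ≤ min a (r / 2)` counts everything.
-/

/-- For totally isotropic `W`, the map `x ↦ b x` embeds `W` in its own dual annihilator, which has
dimension `dim V - dim W`. -/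
theorem two_mul_finrank_le_of_isotropic {K V : Type*} [Field K] [AddCommGroup V] [Module K V]
    [Module.Finite K V] (b : V →ₗ[K] V →ₗ[K] K) (hnd : ∀ x, (∀ y, b x y = 0) → x = 0)
    (W : Submodule K V) (hW : ∀ x ∈ W, ∀ y ∈ W, b x y = 0) :
    2 * Module.finrank K W ≤ Module.finrank K V := by
  have hinj : Function.Injective b := by
    rw [injective_iff_map_eq_zero]
    intro x hx
    exact hnd x fun y => by rw [hx, LinearMap.zero_apply]
  have hle : W.map b ≤ W.dualAnnihilator := by
    rintro _ ⟨x, hx, rfl⟩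
    exact (Submodule.mem_dualAnnihilator _).2 fun y hy => hW x hx y hy
  have h1 : Module.finrank K W ≤ Module.finrank K W.dualAnnihilator :=
    (Submodule.equivMapOfInjective b hinj W).finrank_eq.trans_le (Submodule.finrank_mono hle)
  have h2 : Module.finrank K W + Module.finrank K W.dualAnnihilator = Module.finrank K V :=
    Subspace.finrank_add_finrank_dualAnnihilator_eq W
  omega

/-- With `V` an `𝔽_p`-space (`p` odd) of even dimension `r` carrying a
nondegenerate alternating bilinear form `b`, and `A` an `𝔽_p`-space of dimension `a`, the number
of totally isotropic linear maps `ξ : A → V` equals `∑_{d=0}^{min(a, r/2)} I_d · M_d`, where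
`I_d` is the number of surjective linear maps `A → 𝔽_p^d` and `M_d` is the number of
`d`-dimensional totally isotropic subspaces of `V`. -/
theorem stmt5 (p : ℕ) [Fact p.Prime] (hp2 : p ≠ 2)
    (V : Type) [AddCommGroup V] [Module (ZMod p) V] [Module.Finite (ZMod p) V]
    (r : ℕ) (hre : Even r) (hr : Module.finrank (ZMod p) V = r)
    (b : V →ₗ[ZMod p] V →ₗ[ZMod p] ZMod p)
    (halt : ∀ x, b x x = 0)
    (hnd : ∀ x, (∀ y, b x y = 0) → x = 0)
    (A : Type) [AddCommGroup A] [Module (ZMod p) A] [Module.Finite (ZMod p) A]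
    (a : ℕ) (ha : Module.finrank (ZMod p) A = a) :
    Nat.card {ξ : A →ₗ[ZMod p] V // ∀ x y, b (ξ x) (ξ y) = 0} =
      ∑ d ∈ Finset.range (min a (r / 2) + 1),
        Nat.card {f : A →ₗ[ZMod p] (Fin d → ZMod p) // Function.Surjective f} *
        Nat.card {W : Submodule (ZMod p) V //
          Module.finrank (ZMod p) W = d ∧ ∀ x ∈ W, ∀ y ∈ W, b x y = 0} := by
  have : Finite V := Module.finite_of_finite (ZMod p)
  have : Finite A := Module.finite_of_finite (ZMod p)
  have : ∀ d, Finite (A →ₗ[ZMod p] (Fin d → ZMod p)) := fun d =>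
    Finite.of_injective _ DFunLike.coe_injective
  have : Finite (Submodule (ZMod p) V) := Finite.of_injective _ SetLike.coe_injective
  rw [Finset.sum_range]
  simp_rw [← Nat.card_prod]
  rw [← Nat.card_sigma]
  symm
  have e : ∀ (d : ℕ) (W : Submodule (ZMod p) V), Module.finrank (ZMod p) W = d →
      ((Fin d → ZMod p) ≃ₗ[ZMod p] W) := fun d W h =>
    LinearEquiv.ofFinrankEq _ _ (by rw [h, Module.finrank_fin_fun])
  have hrange : ∀ (d : ℕ) (f : A →ₗ[ZMod p] (Fin d → ZMod p)) (_ : Function.Surjective f)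
      (W : Submodule (ZMod p) V) (h : Module.finrank (ZMod p) W = d),
      LinearMap.range (W.subtype ∘ₗ (e d W h).toLinearMap ∘ₗ f) = W := by
    intro d f hf W h
    rw [LinearMap.range_comp, LinearMap.range_eq_top.2, Submodule.map_top, Submodule.range_subtype]
    exact (e d W h).surjective.comp hf
  refine Nat.card_eq_of_bijective
    (fun s => ⟨s.2.2.1.subtype ∘ₗ (e s.1 s.2.2.1 s.2.2.2.1).toLinearMap ∘ₗ s.2.1.1,
      fun x y => s.2.2.2.2 _ (Subtype.property _) _ (Subtype.property _)⟩) ⟨?_, ?_⟩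
  · rintro ⟨⟨d, hd⟩, ⟨f, hf⟩, ⟨W, hW, hi⟩⟩ ⟨⟨d', hd'⟩, ⟨f', hf'⟩, ⟨W', hW', hi'⟩⟩ h
    replace h := congrArg Subtype.val h
    dsimp only at h hW hW' f f' hf hf'
    have hWW : W = W' := by
      rw [← hrange d f hf W hW, h, hrange d' f' hf' W' hW']
    subst hWW
    have hdd : d = d' := hW.symm.trans hW'
    subst hdd
    have hff : f = f' := by
      ext1 x
      have hx := LinearMap.congr_fun h x
      exact (e d W hW).injective (Subtype.ext hx)
    subst hff
    rfl
  · rintro ⟨ξ, hξ⟩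
    have hiso : ∀ x ∈ LinearMap.range ξ, ∀ y ∈ LinearMap.range ξ, b x y = 0 := by
      rintro _ ⟨x, rfl⟩ _ ⟨y, rfl⟩
      exact hξ x y
    have h1 := two_mul_finrank_le_of_isotropic b hnd _ hiso
    have h2 := LinearMap.finrank_range_le ξ
    refine ⟨⟨⟨Module.finrank (ZMod p) (LinearMap.range ξ), by omega⟩,
      ⟨(e _ (LinearMap.range ξ) rfl).symm.toLinearMap ∘ₗ ξ.rangeRestrict,
        (e _ (LinearMap.range ξ) rfl).symm.surjective.comp ξ.surjective_rangeRestrict⟩,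
      ⟨LinearMap.range ξ, rfl, hiso⟩⟩, ?_⟩
    apply Subtype.ext
    ext1 x
    simp
end

section
/- Let p be an odd prime and r an even positive integer. For 0 ≤ d ≤ r/2 define the rational number a(d) := (∏_{i=0}^{d−1} (p^{r−i} − p^i)) / (∏_{j=1}^{d} (p^j − 1)) (so a(0) = 1). Then a(d) < a(d+1) for all 0 ≤ d < r/2, and consequently the alternating sum ∑_{d=0}^{r/2} (−1)^d a(d) is nonzero. -/
/-!
Consecutive terms satisfy `a (d + 1) = a d * ((p ^ (r - d) - p ^ d) / (p ^ (d + 1) - 1))`. For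
`d < r / 2` one has `r - d ≥ d + 2`, so the numerator of the ratio is at least `p ^ d * (p ^ 2 - 1)`,
which exceeds `p ^ (d + 1) - 1`. Hence the ratio is greater than `1` and the sequence, which starts
at `a 0 = 1`, is positive and strictly increasing. An alternating sum of such a sequence is nonzero
since, up to the sign of its last term, it lies in `(0, a n]` (`alternating_sum_bounds`).
-/

/-- The bound `≤ a n` is what makes the induction go through: the signed partial sums satisfy
`S (n + 1) = a (n + 1) - S n`. -/
lemma alternating_sum_bounds (a : ℕ → ℚ) (m : ℕ) (h0 : 0 < a 0)
    (hinc : ∀ d, d < m → a d < a (d + 1)) (n : ℕ) (hn : n ≤ m) :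
    0 < (-1 : ℚ) ^ n * ∑ d ∈ Finset.range (n + 1), (-1 : ℚ) ^ d * a d ∧
      (-1 : ℚ) ^ n * ∑ d ∈ Finset.range (n + 1), (-1 : ℚ) ^ d * a d ≤ a n := by
  induction n with
  | zero => simpa using h0
  | succ n ih =>
    obtain ⟨hpos, hle⟩ := ih (by omega)
    have hlt := hinc n (by omega)
    have hsq : (-1 : ℚ) ^ (n + 1) * (-1 : ℚ) ^ (n + 1) = 1 := by
      rw [← mul_pow]; norm_num
    have hrec : (-1 : ℚ) ^ (n + 1) * ∑ d ∈ Finset.range (n + 1 + 1), (-1 : ℚ) ^ d * a d =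
        a (n + 1) - (-1 : ℚ) ^ n * ∑ d ∈ Finset.range (n + 1), (-1 : ℚ) ^ d * a d := by
      rw [Finset.sum_range_succ, mul_add, ← mul_assoc _ _ (a (n + 1)), hsq, pow_succ]
      ring
    rw [hrec]
    constructor <;> linarith

/-- The ratio of consecutive terms exceeds `1` as soon as the exponents `k` and `d` are at least
`2` apart. -/
lemma pow_succ_sub_one_lt (q : ℚ) (hq : 3 ≤ q) (d k : ℕ) (hk : d + 2 ≤ k) :
    q ^ (d + 1) - 1 < q ^ k - q ^ d := by
  have hmono : q ^ (d + 2) ≤ q ^ k := pow_le_pow_right₀ (by linarith) hk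
  have hpos : 0 < q ^ d := by positivity
  have hfac : 0 < q ^ d * (q ^ 2 - q - 1) := mul_pos hpos (by nlinarith)
  have hexp : q ^ d * (q ^ 2 - q - 1) = q ^ (d + 2) - q ^ (d + 1) - q ^ d := by ring
  linarith

/-- For an odd prime `p` and even `r > 0`, the rational numbers
`a(d) = (∏_{i=0}^{d-1} (p^{r-i} - p^i)) / (∏_{j=1}^{d} (p^j - 1))` are strictly increasing for
`0 ≤ d ≤ r/2`, and consequently `∑_{d=0}^{r/2} (-1)^d a(d) ≠ 0`. -/
theorem stmt6 (p : ℕ) (hp : p.Prime) (hp2 : p ≠ 2) (r : ℕ) (hr : 0 < r) (hre : Even r)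
    (a : ℕ → ℚ)
    (ha : ∀ d, a d =
      (∏ i ∈ Finset.range d, ((p : ℚ) ^ (r - i) - (p : ℚ) ^ i)) /
      (∏ j ∈ Finset.Icc 1 d, ((p : ℚ) ^ j - 1))) :
    (∀ d, d < r / 2 → a d < a (d + 1)) ∧
    (∑ d ∈ Finset.range (r / 2 + 1), (-1 : ℚ) ^ d * a d) ≠ 0 := by
  have hp3 : (3 : ℚ) ≤ p := by
    have h2 := hp.two_le
    have h3 : 3 ≤ p := by omega
    exact_mod_cast h3
  have h0 : a 0 = 1 := by simp [ha 0]
  have hrec : ∀ d, a (d + 1) =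
      a d * (((p : ℚ) ^ (r - d) - (p : ℚ) ^ d) / ((p : ℚ) ^ (d + 1) - 1)) := by
    intro d
    rw [ha, ha, Finset.prod_range_succ, Finset.prod_Icc_succ_top (by omega), mul_div_mul_comm]
  have hratio : ∀ d, d < r / 2 →
      1 < ((p : ℚ) ^ (r - d) - (p : ℚ) ^ d) / ((p : ℚ) ^ (d + 1) - 1) := by
    intro d hd
    have hden : 1 < (p : ℚ) ^ (d + 1) := one_lt_pow₀ (by linarith) (by omega)
    rw [one_lt_div (by linarith)]
    exact pow_succ_sub_one_lt p hp3 d (r - d) (by omega)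
  have hpos : ∀ d, d ≤ r / 2 → 0 < a d := by
    intro d
    induction d with
    | zero => intro _; rw [h0]; norm_num
    | succ d ih =>
      intro hd
      rw [hrec]
      exact mul_pos (ih (by omega)) (by linarith [hratio d (by omega)])
  have hinc : ∀ d, d < r / 2 → a d < a (d + 1) := by
    intro d hd
    rw [hrec]
    exact lt_mul_of_one_lt_right (hpos d hd.le) (hratio d hd)
  refine ⟨hinc, fun hzero => ?_⟩
  have hbound := (alternating_sum_bounds a (r / 2) (hpos 0 (by omega)) hinc (r / 2) le_rfl).1
  rw [hzero, mul_zero] at hbound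
  exact lt_irrefl _ hbound
end

section
/- Let A be an abelian group, B a finite abelian group of odd order, half : B → B the (unique) additive homomorphism satisfying half b + half b = b for all b ∈ B, and f : A × A → B a biadditive alternating map. If the 2-cocycle c(a, a') := half (f(a', a)) is a 2-coboundary, i.e. there exists a function g : A → B with c(a, a') = g(a) + g(a') − g(a + a') for all a, a' ∈ A, then f = 0. (In other words, the map ι sending f to the cohomology class of c is injective.) -/
/-- Let `B` be a finite abelian group of odd order, `half` the additive
homomorphism with `half b + half b = b`, and `f : A × A → B` biadditive and alternating. If the
2-cocycle `c (a, a') := half (f (a', a))` is a 2-coboundary, then `f = 0`. -/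
theorem stmt10 (A B : Type) [AddCommGroup A] [AddCommGroup B] [Finite B]
    (hodd : Odd (Nat.card B))
    (half : B →+ B) (hhalf : ∀ b, half b + half b = b)
    (f : A → A → B)
    (hf₁ : ∀ a a' a'', f (a + a') a'' = f a a'' + f a' a'')
    (hf₂ : ∀ a a' a'', f a (a' + a'') = f a a' + f a a'')
    (halt : ∀ a, f a a = 0)
    (g : A → B) (hg : ∀ a a', half (f a' a) = g a + g a' - g (a + a')) :
    ∀ a a', f a a' = 0 := by
  intro a b
  -- A coboundary on an abelian group is symmetric.
  have hsymm : half (f a b) = half (f b a) := by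
    rw [hg b a, hg a b, add_comm b a, add_comm (g b) (g a)]
  have hskew : f a b + f b a = 0 := by
    have h := halt (a + b)
    rw [hf₁, hf₂, hf₂, halt, halt] at h
    simpa using h
  calc f a b = half (f a b) + half (f a b) := (hhalf _).symm
    _ = half (f a b) + half (f b a) := by rw [← hsymm]
    _ = half (f a b + f b a) := (map_add half _ _).symm
    _ = 0 := by rw [hskew, map_zero]
end

section
/- Let A be an abelian group and B a finite abelian group of odd order, let half : B → B be the additive homomorphism with half b + half b = b for all b ∈ B, let f : A × A → B be biadditive and alternating, and let G be the group with underlying set B × A and multiplication (b₁, a₁) · (b₂, a₂) := (b₁ + b₂ + half (f(a₂, a₁)), a₁ + a₂). Then two elements (b₁, a₁) and (b₂, a₂) of G commute if and only if f(a₁, a₂) = 0. -/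
/-- In the group on `B × A` with multiplication
`(b₁, a₁) · (b₂, a₂) := (b₁ + b₂ + half (f a₂ a₁), a₁ + a₂)`, two elements `(b₁, a₁)` and
`(b₂, a₂)` commute if and only if `f a₁ a₂ = 0`. -/
theorem stmt13 (A B : Type) [AddCommGroup A] [AddCommGroup B] [Finite B]
    (hodd : Odd (Nat.card B))
    (half : B →+ B) (hhalf : ∀ b, half b + half b = b)
    (f : A → A → B)
    (hf₁ : ∀ a a' a'', f (a + a') a'' = f a a'' + f a' a'')
    (hf₂ : ∀ a a' a'', f a (a' + a'') = f a a' + f a a'')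
    (halt : ∀ a, f a a = 0)
    (mul : B × A → B × A → B × A)
    (hmul : ∀ x y : B × A, mul x y = (x.1 + y.1 + half (f y.2 x.2), x.2 + y.2)) :
    ∀ (b₁ b₂ : B) (a₁ a₂ : A),
      mul (b₁, a₁) (b₂, a₂) = mul (b₂, a₂) (b₁, a₁) ↔ f a₁ a₂ = 0 := by
  intro b₁ b₂ a₁ a₂
  have hskew : f a₂ a₁ = -f a₁ a₂ := by
    have h := halt (a₁ + a₂)
    rw [hf₁, hf₂, hf₂, halt, halt, zero_add, add_zero] at h
    exact eq_neg_of_add_eq_zero_right h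
  -- Commuting means `-half (f a₁ a₂) = half (f a₁ a₂)`, that is, twice the half vanishes.
  rw [hmul, hmul]
  simp only [Prod.mk.injEq, add_comm a₁ a₂, and_true, add_comm b₁ b₂, add_right_inj, hskew,
    map_neg]
  rw [neg_eq_iff_add_eq_zero, hhalf]
end

section
/- Let p be an odd prime, let r₁, r, r₂ be natural numbers with 2·r₂ ≤ r₁·r, let M_P be an antisymmetric r × r matrix over 𝔽_p (M_Pᵀ = −M_P), and let λ be an 𝔽_p-linear map from the space of r₁ × r₁ matrices over 𝔽_p to 𝔽_p^{r₂}. Then the number of r₁ × r matrices M over 𝔽_p satisfying λ(M · M_P · Mᵀ) = 0 is divisible by p^{⌈(r₁·r − 2·r₂)/2⌉}. -/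
/-!
The count `N` is the number of common zeros of `r₂` quadratic forms in `n = r₁ r` variables.
With a primitive additive character `ψ` of `𝔽_p`, orthogonality gives
`p ^ r₂ * N = ∑ y, ∑ M, ψ (y ⬝ lam (M * M_P * Mᵀ))`. For fixed `y` the inner sum is an exponential
sum of one quadratic form; diagonalizing it (`p` is odd) splits the sum into a product of `n`
one-variable sums `∑ x, ψ (a x²)`. Such a sum is `p` if `a = 0` and otherwise a quadratic Gauss
sum, whose square is `± p`; in both cases it is `√p` times an algebraic integer
(`exists_integral_sum_sq`). Hence `p ^ r₂ * N = √p ^ n * α` with `α` an algebraic integer, and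
`N ^ 2 / p ^ (n - 2 r₂) = α ^ 2` is a rational algebraic integer, hence an integer. Comparing
exponents of `p` in `p ^ (n - 2 r₂) ∣ N ^ 2` yields the claim.
-/

open Matrix

/-- A one-variable quadratic exponential sum is `√p` times an algebraic integer. -/
lemma exists_integral_sum_sq (p : ℕ) [Fact p.Prime] (hp2 : p ≠ 2)
    (ψ : AddChar (ZMod p) ℂ) (hψ : ψ.IsPrimitive) (s : ℂ) (hs : s ^ 2 = p) (a : ZMod p) :
    ∃ α : ℂ, IsIntegral ℤ α ∧ ∑ x : ZMod p, ψ (a * (x * x)) = s * α := by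
  have hp0 : (p : ℂ) ≠ 0 := by exact_mod_cast (Fact.out : p.Prime).ne_zero
  have hs0 : s ≠ 0 := by
    rintro rfl
    exact hp0 (by simpa using hs.symm)
  have hF : ringChar (ZMod p) ≠ 2 := by rwa [ZMod.ringChar_zmod_n]
  by_cases ha : a = 0
  · refine ⟨s, IsIntegral.of_pow (n := 2) two_pos ?_, ?_⟩
    · rw [hs]
      exact isIntegral_algebraMap (R := ℤ) (x := (p : ℤ))
    · subst ha
      simp [← pow_two, hs]
  · let χ : MulChar (ZMod p) ℂ := (quadraticChar (ZMod p)).ringHomComp (Int.castRingHom ℂ)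
    have hinj : Function.Injective (Int.castRingHom ℂ) := Int.cast_injective
    have hχ1 : χ ≠ 1 :=
      (MulChar.ringHomComp_ne_one_iff hinj).mpr (quadraticChar_ne_one hF)
    have hχ2 : χ.IsQuadratic := (quadraticChar_isQuadratic (ZMod p)).comp _
    -- `1 + χ t` counts the square roots of `t`, and `∑ t, ψ (a t) = 0`.
    have hsum : ∑ x : ZMod p, ψ (a * (x * x)) = gaussSum χ (ψ.mulShift a) := by
      have h1 : ∑ x : ZMod p, ψ (a * (x * x)) =
          ∑ t : ZMod p, ∑ x : ZMod p with x * x = t, ψ (a * t) := by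
        rw [← Finset.sum_fiberwise (s := Finset.univ) (g := fun x : ZMod p => x * x)]
        refine Finset.sum_congr rfl fun t _ => Finset.sum_congr rfl fun x hx => ?_
        rw [(Finset.mem_filter.mp hx).2]
      have h2 : ∀ t : ZMod p, ((Finset.univ.filter fun x : ZMod p => x * x = t).card : ℂ) =
          χ t + 1 := by
        intro t
        have h := quadraticChar_card_sqrts hF t
        have h' : {x : ZMod p | x ^ 2 = t}.toFinset =
            Finset.univ.filter fun x : ZMod p => x * x = t := by
          ext x
          simp [pow_two]
        rw [h'] at h
        have h3 := congrArg (Int.cast : ℤ → ℂ) h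
        simpa [χ] using h3
      have h3 : ∑ t : ZMod p, ψ (a * t) = 0 := by
        have := AddChar.sum_mulShift a hψ
        rw [if_neg ha] at this
        simpa [mul_comm] using this
      rw [h1]
      simp only [Finset.sum_const, nsmul_eq_mul, h2, add_mul, one_mul, Finset.sum_add_distrib, h3,
        add_zero]
      simp [gaussSum, AddChar.mulShift_apply]
    have hprim : (ψ.mulShift a).IsPrimitive :=
      AddChar.IsPrimitive.of_ne_one (hψ ha)
    have hsq := gaussSum_sq hχ1 hχ2 hprim
    refine ⟨gaussSum χ (ψ.mulShift a) / s, IsIntegral.of_pow (n := 2) two_pos ?_, ?_⟩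
    · rw [div_pow, hsq, hs, ZMod.card, mul_div_cancel_right₀ _ hp0]
      exact isIntegral_algebraMap (R := ℤ) (x := quadraticChar (ZMod p) (-1))
    · rw [hsum, mul_div_cancel₀ _ hs0]

lemma addChar_map_sum {ι A : Type*} [AddCommMonoid A] (ψ : AddChar A ℂ)
    (t : Finset ι) (g : ι → A) : ψ (∑ i ∈ t, g i) = ∏ i ∈ t, ψ (g i) := by
  classical
  induction t using Finset.induction_on with
  | empty => simp
  | insert i t hi ih => rw [Finset.sum_insert hi, Finset.prod_insert hi, AddChar.map_add_eq_mul, ih]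

lemma exists_integral_sum_diagonal (p : ℕ) [Fact p.Prime] (hp2 : p ≠ 2)
    (ψ : AddChar (ZMod p) ℂ) (hψ : ψ.IsPrimitive) (s : ℂ) (hs : s ^ 2 = p)
    (n : ℕ) (w : Fin n → ZMod p) :
    ∃ α : ℂ, IsIntegral ℤ α ∧
      ∑ x : Fin n → ZMod p, ψ (∑ i, w i * (x i * x i)) = s ^ n * α := by
  choose α hα hsum using fun i => exists_integral_sum_sq p hp2 ψ hψ s hs (w i)
  refine ⟨∏ i, α i, IsIntegral.prod _ fun i _ => hα i, ?_⟩
  simp only [addChar_map_sum]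
  rw [← Fintype.prod_sum (fun i (t : ZMod p) => ψ (w i * (t * t)))]
  simp [hsum, Finset.prod_mul_distrib]

/-- The exponential sum of a quadratic form in `n` variables is `√p ^ n` times an algebraic
integer, by diagonalization. -/
lemma exists_integral_sum_quadraticForm (p : ℕ) [Fact p.Prime] (hp2 : p ≠ 2)
    (ψ : AddChar (ZMod p) ℂ) (hψ : ψ.IsPrimitive) (s : ℂ) (hs : s ^ 2 = p)
    {V : Type*} [AddCommGroup V] [Module (ZMod p) V] [Module.Finite (ZMod p) V] [Fintype V]
    (Q : QuadraticForm (ZMod p) V) :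
    ∃ α : ℂ, IsIntegral ℤ α ∧ ∑ v : V, ψ (Q v) = s ^ Module.finrank (ZMod p) V * α := by
  have h2 : (2 : ZMod p) ≠ 0 :=
    Ring.two_ne_zero (by rwa [ZMod.ringChar_zmod_n])
  let _ : Invertible (2 : ZMod p) := invertibleOfNonzero h2
  obtain ⟨w, ⟨e⟩⟩ := Q.equivalent_weightedSumSquares
  obtain ⟨α, hα, hsum⟩ := exists_integral_sum_diagonal p hp2 ψ hψ s hs _ w
  refine ⟨α, hα, ?_⟩
  rw [← hsum]
  refine Fintype.sum_equiv e.toLinearEquiv.toEquiv _ _ fun v => ?_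
  have h := e.map_app v
  rw [QuadraticMap.weightedSumSquares_apply] at h
  rw [← h]
  rfl

/-- Let `p` be an odd prime, `2 r₂ ≤ r₁ r`, `M_P` an antisymmetric `r × r`
matrix over `𝔽_p` and `lam` a linear map from `r₁ × r₁` matrices to `𝔽_p^{r₂}`. Then the number
of `r₁ × r` matrices `M` with `lam (M * M_P * Mᵀ) = 0` is divisible by
`p^{⌈(r₁ r - 2 r₂)/2⌉}`. -/
theorem stmt16 (p : ℕ) (hp : p.Prime) (hp2 : p ≠ 2)
    (r₁ r r₂ : ℕ) (hr : 2 * r₂ ≤ r₁ * r)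
    (M_P : Matrix (Fin r) (Fin r) (ZMod p)) (hMP : M_Pᵀ = -M_P)
    (lam : Matrix (Fin r₁) (Fin r₁) (ZMod p) →ₗ[ZMod p] (Fin r₂ → ZMod p)) :
    p ^ ((r₁ * r - 2 * r₂ + 1) / 2) ∣
      Nat.card {M : Matrix (Fin r₁) (Fin r) (ZMod p) // lam (M * M_P * Mᵀ) = 0} := by
  classical
  have : Fact p.Prime := ⟨hp⟩
  have hp0 : (p : ℂ) ≠ 0 := by exact_mod_cast hp.ne_zero
  let ψ : AddChar (ZMod p) ℂ := ZMod.stdAddChar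
  have hψ : ψ.IsPrimitive := ZMod.isPrimitive_stdAddChar p
  obtain ⟨s, hs⟩ : ∃ s : ℂ, s ^ 2 = p := IsAlgClosed.exists_pow_nat_eq _ two_pos
  let f : Matrix (Fin r₁) (Fin r) (ZMod p) → Fin r₂ → ZMod p := fun M => lam (M * M_P * Mᵀ)
  set N := Nat.card {M : Matrix (Fin r₁) (Fin r) (ZMod p) // lam (M * M_P * Mᵀ) = 0} with hN
  have key : ∀ y : Fin r₂ → ZMod p, ∃ α : ℂ, IsIntegral ℤ α ∧
      ∑ M, ψ (∑ i, y i * f M i) = s ^ (r₁ * r) * α := by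
    intro y
    let B : LinearMap.BilinForm (ZMod p) (Matrix (Fin r₁) (Fin r) (ZMod p)) :=
      LinearMap.mk₂ (ZMod p) (fun M M' => ∑ i, y i * lam (M * M_P * M'ᵀ) i)
        (by intros; simp [Matrix.add_mul, mul_add, Finset.sum_add_distrib])
        (by intros; simp [Finset.mul_sum, mul_left_comm])
        (by intros; simp [Matrix.mul_add, mul_add, Finset.sum_add_distrib])
        (by intros; simp [Finset.mul_sum, mul_left_comm])
    obtain ⟨α, hα, h⟩ :=
      exists_integral_sum_quadraticForm p hp2 ψ hψ s hs (LinearMap.BilinMap.toQuadraticMap B)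
    refine ⟨α, hα, ?_⟩
    rw [Module.finrank_matrix] at h
    simpa [B, f] using h
  choose α hα hkey using key
  -- Orthogonality of characters, in each of the `r₂` coordinates of `y`.
  have orth : ∀ M, ∑ y : Fin r₂ → ZMod p, ψ (∑ i, y i * f M i) =
      if f M = 0 then (p : ℂ) ^ r₂ else 0 := by
    intro M
    simp only [addChar_map_sum]
    rw [← Fintype.prod_sum (fun i (t : ZMod p) => ψ (t * f M i))]
    simp only [AddChar.sum_mulShift _ hψ, ZMod.card]
    split_ifs with h
    · simp [h]
    · obtain ⟨i, hi⟩ := Function.ne_iff.mp h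
      exact Finset.prod_eq_zero (Finset.mem_univ i) (by rw [if_neg (by simpa using hi), Nat.cast_zero])
  have hcount : (N : ℂ) * (p : ℂ) ^ r₂ = s ^ (r₁ * r) * ∑ y, α y := by
    have h1 : ∑ M, ∑ y : Fin r₂ → ZMod p, ψ (∑ i, y i * f M i) = (N : ℂ) * (p : ℂ) ^ r₂ := by
      simp only [orth]
      rw [← Finset.sum_filter, Finset.sum_const, nsmul_eq_mul, hN, Nat.card_eq_fintype_card,
        Fintype.card_subtype]
    rw [← h1, Finset.sum_comm, Finset.mul_sum]
    exact Finset.sum_congr rfl fun y _ => hkey y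
  set k := r₁ * r - 2 * r₂ with hk
  set A := ∑ y, α y with hA
  have hAint : IsIntegral ℤ (A ^ 2) := (IsIntegral.sum _ fun y _ => hα y).pow 2
  have hsq : (N : ℂ) ^ 2 = (p : ℂ) ^ k * A ^ 2 := by
    have h1 : ((N : ℂ) * (p : ℂ) ^ r₂) ^ 2 = (s ^ (r₁ * r) * A) ^ 2 := by rw [hcount]
    have h2 : (s ^ (r₁ * r)) ^ 2 = (p : ℂ) ^ k * ((p : ℂ) ^ r₂) ^ 2 := by
      rw [← pow_mul, mul_comm, pow_mul, hs, ← pow_mul, ← pow_add]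
      congr 1
      omega
    rw [mul_pow, mul_pow, h2] at h1
    have h3 : ((p : ℂ) ^ r₂) ^ 2 ≠ 0 := by positivity
    apply mul_right_cancel₀ h3
    rw [h1]
    ring
  -- A rational algebraic integer is an integer.
  have hdvd : p ^ k ∣ N ^ 2 := by
    have hq : A ^ 2 = algebraMap ℚ ℂ ((N : ℚ) ^ 2 / (p : ℚ) ^ k) := by
      have : (p : ℂ) ^ k ≠ 0 := pow_ne_zero _ hp0
      push_cast [eq_ratCast]
      rw [hsq, mul_div_cancel_left₀ _ this]
    rw [hq, isIntegral_algebraMap_iff (algebraMap ℚ ℂ).injective,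
      IsIntegrallyClosed.isIntegral_iff] at hAint
    obtain ⟨z, hz⟩ := hAint
    have hpq : (p : ℚ) ^ k ≠ 0 := pow_ne_zero _ (by exact_mod_cast hp.ne_zero)
    rw [eq_div_iff hpq] at hz
    have hz' : z * (p : ℤ) ^ k = (N : ℤ) ^ 2 := by
      have : ((z * (p : ℤ) ^ k : ℤ) : ℚ) = (((N : ℤ) ^ 2 : ℤ) : ℚ) := by
        push_cast
        simpa using hz
      exact_mod_cast this
    have : ((p ^ k : ℕ) : ℤ) ∣ ((N ^ 2 : ℕ) : ℤ) :=
      ⟨z, by push_cast; rw [← hz', mul_comm]⟩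
    exact_mod_cast this
  by_cases hN0 : N = 0
  · simp [hN0]
  rw [hp.pow_dvd_iff_le_factorization (pow_ne_zero _ hN0), Nat.factorization_pow] at hdvd
  rw [hp.pow_dvd_iff_le_factorization hN0]
  simp at hdvd
  omega
end
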